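/- Let G = G' × ℤ/n where G' is a nontrivial finite nilpotent group of odd order with no cyclic Sylow subgroup and gcd(n, |G'|) = 1. For every element x of G whose G'-component is nontrivial, the number of distinct cyclic subgroups of G of order o(x) is at least 3. -/

import Mathlib

/-!
Let `p` be an odd prime divisor of the order of `x.1`. In the first factor there is an element `e`
of the second term of the upper central series with `e ^ p = 1` and `e ∉ ⟨x.1⟩`. As commutators
with `e` are central and `p` is odd, `(x * e ^ i) ^ p = x ^ p`, so the `p` elements `x * e ^ i` have
the same order as `x`; they generate distinct cyclic subgroups because `e ∉ ⟨x⟩`.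

To find `e`, let `⟨m⟩` be maximal among the normal cyclic `p`-subgroups and let `y ∉ ⟨m⟩` be a
`p`-element which is central modulo `⟨m⟩` with `y ^ p ∈ ⟨m⟩`. By lifting the exponent, `y` commutes
with `m ^ p`, whence `(y * c) ^ p = y ^ p * c ^ p` for `c ∈ ⟨m⟩`. Maximality forces
`y ^ p = m ^ (p * j)`, and `y * m ^ (-j)` is an element of order `p` outside `⟨m⟩` in the second
term of the upper central series. The group `⟨m⟩` also has an element of order `p`, which is
central. Since a cyclic group has at most one subgroup of order `p`, one of these two elements is
not in `⟨x.1⟩`.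
-/

open Subgroup
open scoped commutatorElement

section Commutator

variable {G : Type*} [Group G] {a b : G}

lemma commutatorElement_pow_left (h : Commute a ⁅a, b⁆) (n : ℕ) : ⁅a ^ n, b⁆ = ⁅a, b⁆ ^ n := by
  have hconj : b * a⁻¹ * b⁻¹ = a⁻¹ * ⁅a, b⁆ := by rw [commutatorElement_def]; group
  calc ⁅a ^ n, b⁆ = a ^ n * (b * a⁻¹ * b⁻¹) ^ n := by
        rw [conj_pow, commutatorElement_def, inv_pow]; group
    _ = ⁅a, b⁆ ^ n := by rw [hconj, h.inv_left.mul_pow, inv_pow, mul_inv_cancel_left]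

lemma mul_pow_of_commute_commutatorElement (ha : Commute a ⁅b, a⁆) (hb : Commute b ⁅b, a⁆) (n : ℕ) :
    (a * b) ^ n = a ^ n * b ^ n * ⁅b, a⁆ ^ n.choose 2 := by
  induction n with
  | zero => simp
  | succ k ih =>
    have hswap : b ^ k * a = a * b ^ k * ⁅b, a⁆ ^ k := by
      rw [((ha.mul_left (hb.pow_left k)).pow_right k).eq, ← commutatorElement_pow_left hb,
        commutatorElement_def]
      group
    calc (a * b) ^ (k + 1) = a ^ k * b ^ k * (a * b) * ⁅b, a⁆ ^ k.choose 2 := by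
          rw [pow_succ, ih, mul_assoc, ← ((ha.mul_left hb).pow_right _).eq, mul_assoc (_ * _)]
      _ = a ^ k * (b ^ k * a) * b * ⁅b, a⁆ ^ k.choose 2 := by simp only [mul_assoc]
      _ = a ^ k * a * (b ^ k * b) * ⁅b, a⁆ ^ k * ⁅b, a⁆ ^ k.choose 2 := by
          rw [hswap]; simp only [mul_assoc, (hb.pow_right k).left_comm]
      _ = a ^ (k + 1) * b ^ (k + 1) * ⁅b, a⁆ ^ (k + 1).choose 2 := by
          rw [Nat.choose_succ_succ' k 1, Nat.choose_one_right, pow_add ⁅b, a⁆, ← pow_succ,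
            ← pow_succ, mul_assoc _ (_ ^ k)]

lemma mul_pow_of_odd_of_commute_pow {n : ℕ} (hn : Odd n) (hc : ⁅b, a⁆ ∈ center G)
    (h : Commute (b ^ n) a) : (a * b) ^ n = a ^ n * b ^ n := by
  have hcomm (g : G) : Commute g ⁅b, a⁆ := mem_center_iff.1 hc g
  have hpow : ⁅b, a⁆ ^ n = 1 := by
    rw [← commutatorElement_pow_left (hcomm b), h.commutator_eq]
  have hdvd : n ∣ n.choose 2 := by
    obtain ⟨k, rfl⟩ := hn
    exact ⟨k, by rw [Nat.choose_two_right, Nat.add_sub_cancel, mul_left_comm]; simp⟩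
  rw [mul_pow_of_commute_commutatorElement (hcomm a) (hcomm b),
    orderOf_dvd_iff_pow_eq_one.1 ((orderOf_dvd_of_pow_eq_one hpow).trans hdvd), mul_one]

lemma mul_pow_of_odd_of_mem_upperCentralSeries_two {n : ℕ} (hn : Odd n)
    (hb : b ∈ Subgroup.upperCentralSeries G 2) (hbn : b ^ n = 1) : (a * b) ^ n = a ^ n := by
  have hc : ⁅b, a⁆ ∈ center G :=
    Subgroup.upperCentralSeries_one G ▸ Subgroup.mem_upperCentralSeries_succ_iff.1 hb a
  rw [mul_pow_of_odd_of_commute_pow hn hc (hbn ▸ Commute.one_left a), hbn, mul_one]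

end Commutator

section CyclicSubgroups

variable {G : Type*} [Group G] {p : ℕ} {x e : G}

variable (G) in
/-- The cyclic subgroups of `G` having a generator of order `d`; their number is `C_d` in the
paper. -/
def cyclicSubgroupsOfOrder (d : ℕ) : Set (Subgroup G) :=
  {H | ∃ g : G, orderOf g = d ∧ H = zpowers g}

lemma orderOf_eq_of_pow_prime_eq {y : G} (hp : p.Prime) (hx : p ∣ orderOf x) (hpow : y ^ p = x ^ p)
    (hy : y ∉ zpowers x) : orderOf y = orderOf x := by
  have hpy : p ∣ orderOf y := by
    by_contra hpy
    obtain ⟨k, hk⟩ := exists_pow_eq_self_of_coprime (hp.coprime_iff_not_dvd.2 hpy)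
    exact hy (hk ▸ hpow ▸ pow_mem (npow_mem_zpowers x p) k)
  have hdiv := congrArg orderOf hpow
  rw [orderOf_pow_of_dvd hp.ne_zero hpy, orderOf_pow_of_dvd hp.ne_zero hx] at hdiv
  exact (Nat.div_left_inj hpy hx).1 hdiv

lemma mem_zpowers_zpow_of_pow_prime_pow_eq_one {n : ℕ} (hp : p.Prime) (he : e ^ p ^ n = 1) {k : ℤ}
    (hk : ¬ (p : ℤ) ∣ k) : e ∈ zpowers (e ^ k) := by
  rw [mem_zpowers_zpow_iff, Int.gcd_comm, ← Int.isCoprime_iff_gcd_eq_one]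
  exact ((Nat.prime_iff_prime_int.1 hp).coprime_iff_not_dvd.2 hk).pow_left.of_isCoprime_of_dvd_left
    (by exact_mod_cast orderOf_dvd_of_pow_eq_one he)

lemma mem_zpowers_zpow_of_pow_prime_eq_one (hp : p.Prime) (he : e ^ p = 1) {k : ℤ}
    (hk : ¬ (p : ℤ) ∣ k) : e ∈ zpowers (e ^ k) :=
  mem_zpowers_zpow_of_pow_prime_pow_eq_one (n := 1) hp (by rwa [pow_one]) hk

lemma exists_mem_zpowers_orderOf_eq_prime {n : ℕ} (hp : p.Prime) (hx : x ^ p ^ n = 1)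
    (hne : x ≠ 1) : ∃ z ∈ zpowers x, orderOf z = p := by
  obtain ⟨k, -, hk⟩ := (Nat.dvd_prime_pow hp).1 (orderOf_dvd_of_pow_eq_one hx)
  have hdvd : p ∣ orderOf x := by
    rw [hk]
    refine dvd_pow_self p ?_
    rintro rfl
    exact hne (orderOf_eq_one_iff.1 hk)
  have hfin : orderOf x ≠ 0 := hk ▸ pow_ne_zero k hp.ne_zero
  exact ⟨_, npow_mem_zpowers x _, orderOf_pow_orderOf_div hfin hdvd⟩

variable [Finite G]

lemma zpowers_eq_of_mem_of_orderOf_eq {y : G} (h : x ∈ zpowers y) (hord : orderOf y = orderOf x) :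
    zpowers x = zpowers y :=
  eq_of_le_of_card_ge (zpowers_le.2 h) (by rw [Nat.card_zpowers, Nat.card_zpowers, hord])

lemma injective_zpowers_mul_pow (hp : p.Prime) (he : e ^ p = 1) (hex : e ∉ zpowers x)
    (hord : ∀ i : ℕ, orderOf (x * e ^ i) = orderOf x) :
    Function.Injective fun i : Fin p ↦ zpowers (x * e ^ (i : ℕ)) := by
  intro i j hij
  by_contra hne
  have hdvd : ¬ (p : ℤ) ∣ (j : ℤ) - i := fun h ↦
    hne <| Fin.ext <| Nat.ModEq.eq_of_lt_of_lt (Nat.modEq_iff_dvd.2 h) i.2 j.2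
  set H := zpowers (x * e ^ (i : ℕ))
  have hi : x * e ^ (i : ℕ) ∈ H := mem_zpowers _
  have hj : x * e ^ (j : ℕ) ∈ H := (show H = _ from hij) ▸ mem_zpowers _
  have hdiff : e ^ ((j : ℤ) - i) ∈ H := by
    convert mul_mem (inv_mem hi) hj using 1
    rw [sub_eq_neg_add, zpow_add, zpow_neg, zpow_natCast, zpow_natCast]
    group
  have heH : e ∈ H := zpowers_le.2 hdiff (mem_zpowers_zpow_of_pow_prime_eq_one hp he hdvd)
  have hxH : x ∈ H := (mul_mem_cancel_right (pow_mem heH _)).1 hi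
  exact hex (zpowers_eq_of_mem_of_orderOf_eq hxH (hord i) ▸ heH)

theorem prime_le_ncard_cyclicSubgroupsOfOrder (hp : p.Prime) (hodd : Odd p) (hx : p ∣ orderOf x)
    (he : e ∈ Subgroup.upperCentralSeries G 2) (hep : e ^ p = 1) (hex : e ∉ zpowers x) :
    p ≤ (cyclicSubgroupsOfOrder G (orderOf x)).ncard := by
  have hpow (i : ℕ) : (x * e ^ i) ^ p = x ^ p :=
    mul_pow_of_odd_of_mem_upperCentralSeries_two hodd (pow_mem he i)
      (by rw [pow_right_comm, hep, one_pow])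
  have hord (i : ℕ) : orderOf (x * e ^ i) = orderOf x := by
    by_cases hi : (p : ℤ) ∣ i
    · obtain ⟨k, rfl⟩ := Int.natCast_dvd_natCast.1 hi
      rw [pow_mul, hep, one_pow, mul_one]
    · refine orderOf_eq_of_pow_prime_eq hp hx (hpow i) fun hmem ↦ hex ?_
      have hei := (mul_mem_cancel_left (mem_zpowers x)).1 hmem
      rw [← zpow_natCast] at hei
      exact zpowers_le.2 hei (mem_zpowers_zpow_of_pow_prime_eq_one hp hep hi)
  calc p = (Set.range fun i : Fin p ↦ zpowers (x * e ^ (i : ℕ))).ncard := by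
        rw [Set.ncard_range_of_injective (injective_zpowers_mul_pow hp hep hex hord), Nat.card_fin]
    _ ≤ (cyclicSubgroupsOfOrder G (orderOf x)).ncard := by
        refine Set.ncard_le_ncard ?_ (Set.toFinite _)
        rintro _ ⟨i, rfl⟩
        exact ⟨_, hord i, rfl⟩

lemma mem_zpowers_of_pow_orderOf_eq_one [IsCyclic G] {z : G} (h : e ^ orderOf z = 1) :
    e ∈ zpowers z := by
  classical
  have := Fintype.ofFinite G
  have hsub : (zpowers z : Set G).toFinset ⊆ ({g | g ^ orderOf z = 1} : Finset G) := by
    intro g hg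
    have hdvd := orderOf_dvd_of_mem_zpowers (Set.mem_toFinset.1 hg)
    simpa using orderOf_dvd_iff_pow_eq_one.1 hdvd
  have hcard : Finset.card {g : G | g ^ orderOf z = 1} ≤ (zpowers z : Set G).toFinset.card := by
    rw [← Set.ncard_eq_toFinset_card', ← Nat.card_coe_set_eq, SetLike.coe_sort_coe,
      Nat.card_zpowers]
    exact IsCyclic.card_pow_eq_one_le (orderOf_pos z)
  exact Set.mem_toFinset.1 (Finset.eq_of_subset_of_card_le hsub hcard ▸ by simpa using h)

end CyclicSubgroups

section Arithmetic

lemma prime_pow_dvd_mul_sub_one {p n : ℕ} (hp : p.Prime) (hodd : Odd p) {a : ℤ}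
    (h : (p : ℤ) ^ n ∣ a ^ p - 1) : (p : ℤ) ^ n ∣ p * (a - 1) := by
  rcases n.eq_zero_or_pos with rfl | hn
  · simp
  have hp' := Nat.prime_iff_prime_int.1 hp
  have hfermat : (p : ℤ) ∣ a ^ p - a := by
    have := Fact.mk hp
    rw [← ZMod.intCast_zmod_eq_zero_iff_dvd]
    simp
  have hsub : (p : ℤ) ∣ a - 1 := by
    have := dvd_sub ((dvd_pow_self _ hn.ne').trans h) hfermat
    rwa [sub_sub_sub_cancel_left] at this
  have hpa : ¬ (p : ℤ) ∣ a := fun hpa ↦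
    hp'.not_isUnit (isUnit_of_dvd_one (by simpa using dvd_sub hpa hsub))
  have hlte := emultiplicity_pow_prime_sub_pow_prime hp' hodd hsub hpa
  rw [one_pow] at hlte
  have hself : FiniteMultiplicity (p : ℤ) p := .of_not_isUnit hp'.not_isUnit hp'.ne_zero
  rwa [pow_dvd_iff_le_emultiplicity, emultiplicity_mul hp', add_comm, hself.emultiplicity_self,
    ← hlte, ← pow_dvd_iff_le_emultiplicity]

end Arithmetic

section NormalCyclic

variable {G : Type*} [Group G] {p : ℕ} {m c y : G}

lemma normal_zpowers_of_mem [hm : (zpowers m).Normal] (hc : c ∈ zpowers m) :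
    (zpowers c).Normal := by
  refine ⟨fun d hd g ↦ ?_⟩
  obtain ⟨j, rfl⟩ := hd
  obtain ⟨i, rfl⟩ := hc
  obtain ⟨a, ha⟩ := hm.conj_mem m (mem_zpowers m) g
  refine ⟨j * a, ?_⟩
  simp only at ha ⊢
  rw [← conj_zpow, ← conj_zpow, ← ha]
  simp only [← zpow_mul]
  ring_nf

lemma pow_mul_pow_inv_eq_zpow_pow {a : ℤ} (h : y * m * y⁻¹ = m ^ a) (j : ℕ) :
    y ^ j * m * (y ^ j)⁻¹ = m ^ a ^ j := by
  induction j with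
  | zero => simp
  | succ j ih =>
    calc y ^ (j + 1) * m * (y ^ (j + 1))⁻¹ = y * (y ^ j * m * (y ^ j)⁻¹) * y⁻¹ := by
          rw [pow_succ']; group
      _ = m ^ a ^ (j + 1) := by rw [ih, ← conj_zpow, h, ← zpow_mul, pow_succ']

lemma commute_pow_prime_of_commute_pow {n : ℕ} (hp : p.Prime) (hodd : Odd p) (hm : m ^ p ^ n = 1)
    (hconj : y * m * y⁻¹ ∈ zpowers m) (hcomm : Commute (y ^ p) m) : Commute y (m ^ p) := by
  obtain ⟨a, ha⟩ := hconj
  obtain ⟨k, -, hk⟩ := (Nat.dvd_prime_pow hp).1 (orderOf_dvd_of_pow_eq_one hm)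
  have hpow : m ^ (a ^ p - 1) = 1 := by
    rw [zpow_sub_one, ← pow_mul_pow_inv_eq_zpow_pow ha.symm, hcomm.eq]
    group
  have hdvd : (p : ℤ) ^ k ∣ a ^ p - 1 := by
    exact_mod_cast hk ▸ orderOf_dvd_iff_zpow_eq_one.2 hpow
  have hone : m ^ (p * (a - 1) : ℤ) = 1 := by
    rw [← orderOf_dvd_iff_zpow_eq_one, hk]
    exact_mod_cast prime_pow_dvd_mul_sub_one hp hodd hdvd
  refine mul_inv_eq_iff_eq_mul.1 ?_
  calc y * m ^ p * y⁻¹ = m ^ (p * (a - 1) : ℤ) * m ^ p := by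
        rw [← conj_pow, ← ha, ← zpow_natCast, ← zpow_natCast, ← zpow_mul, ← zpow_add]
        ring_nf
    _ = m ^ p := by rw [hone, one_mul]

end NormalCyclic

section Nilpotent

variable {G : Type*} [Group G] [Group.IsNilpotent G] {p : ℕ} {m c y e : G}

lemma exists_mem_upperCentralSeriesStep_of_not_le {K M : Subgroup G} [K.Normal] [M.Normal]
    (h : ¬ K ≤ M) : ∃ y ∈ K, y ∉ M ∧ y ∈ M.upperCentralSeriesStep := by
  have hex : ∃ n, ¬ K ⊓ Subgroup.upperCentralSeries G n ≤ M := by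
    obtain ⟨n, hn⟩ := Group.IsNilpotent.nilpotent G
    exact ⟨n, by rwa [hn, inf_top_eq]⟩
  obtain ⟨n, hmin, hn⟩ := Nat.exists_not_and_succ_of_not_zero_of_exists (by simp) hex
  obtain ⟨y, ⟨hyK, hyn⟩, hyM⟩ := SetLike.not_le_iff_exists.1 hn
  have hcomm (g : G) : ⁅y, g⁆ ∈ K :=
    commutator_le_left K ⊤ (commutator_mem_commutator hyK (mem_top g))
  exact ⟨y, hyK, hyM, fun g ↦ not_not.1 hmin ⟨hcomm g, hyn g⟩⟩

lemma exists_mem_upperCentralSeriesStep_pow_mem {K M : Subgroup G} [K.Normal] [M.Normal]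
    (hK : IsPGroup p K) (h : ¬ K ≤ M) : ∃ y ∉ M, y ^ p ∈ M ∧ y ∈ M.upperCentralSeriesStep := by
  obtain ⟨y, hyK, hyM, hy⟩ := exists_mem_upperCentralSeriesStep_of_not_le h
  have hex : ∃ k, y ^ p ^ k ∈ M := by
    obtain ⟨k, hk⟩ := hK ⟨y, hyK⟩
    have : y ^ p ^ k = 1 := by simpa using congrArg Subtype.val hk
    exact ⟨k, this ▸ one_mem M⟩
  obtain ⟨k, hk, hk'⟩ := Nat.exists_not_and_succ_of_not_zero_of_exists
    (by rwa [pow_zero, pow_one]) hex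
  exact ⟨y ^ p ^ k, hk, by rwa [← pow_mul, ← pow_succ], pow_mem hy _⟩

lemma mem_center_of_normal_zpowers [(zpowers c).Normal] (hp : p.Prime) (hcp : c ^ p = 1) :
    c ∈ center G := by
  by_cases hc : c = 1
  · exact hc ▸ one_mem _
  obtain ⟨_, ⟨k, rfl⟩, hne, hk⟩ := exists_mem_upperCentralSeriesStep_of_not_le
    (K := zpowers c) (M := ⊥) (by simpa using hc)
  have hcenter : c ^ k ∈ center G := by
    rw [← Subgroup.upperCentralSeries_one]
    exact hk
  have hpk : ¬ (p : ℤ) ∣ k := by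
    rintro ⟨j, rfl⟩
    exact hne (by simp [zpow_mul, hcp])
  exact zpowers_le.2 hcenter (mem_zpowers_zpow_of_pow_prime_eq_one hp hcp hpk)

lemma mem_center_of_mem_zpowers [(zpowers m).Normal] (hp : p.Prime) (hc : c ∈ zpowers m)
    (hcp : c ^ p = 1) : c ∈ center G :=
  have := normal_zpowers_of_mem hc
  mem_center_of_normal_zpowers hp hcp

lemma mul_pow_prime_of_pow_mem_zpowers [hnorm : (zpowers m).Normal] {n : ℕ} (hp : p.Prime)
    (hodd : Odd p) (hm : m ^ p ^ n = 1) (hy : y ^ p ∈ zpowers m) (hc : c ∈ zpowers m) :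
    (y * c) ^ p = y ^ p * c ^ p := by
  have hcomm {a b : G} (ha : a ∈ zpowers m) (hb : b ∈ zpowers m) : Commute a b := by
    obtain ⟨i, rfl⟩ := ha
    obtain ⟨j, rfl⟩ := hb
    exact Commute.zpow_zpow_self m i j
  have hmp : Commute y (m ^ p) :=
    commute_pow_prime_of_commute_pow hp hodd hm (hnorm.conj_mem m (mem_zpowers m) y)
      (hcomm hy (mem_zpowers m))
  have hcp : Commute (c ^ p) y := by
    obtain ⟨k, rfl⟩ := hc
    rw [← zpow_natCast, zpow_comm, zpow_natCast]
    exact (hmp.zpow_right k).symm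
  have hd : ⁅c, y⁆ ∈ zpowers m :=
    commutator_le_left _ ⊤ (commutator_mem_commutator hc (mem_top y))
  have hdp : ⁅c, y⁆ ^ p = 1 := by
    rw [← commutatorElement_pow_left (hcomm hc hd), hcp.commutator_eq]
  exact mul_pow_of_odd_of_commute_pow hodd (mem_center_of_mem_zpowers hp hd hdp) hcp

lemma mem_upperCentralSeries_two_of_mem_upperCentralSeriesStep [(zpowers m).Normal] {n : ℕ}
    (hp : p.Prime) (hodd : Odd p) (hm : m ^ p ^ n = 1) (hep : e ^ p = 1)
    (he : e ∈ (zpowers m).upperCentralSeriesStep) : e ∈ Subgroup.upperCentralSeries G 2 := by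
  have hinv : e⁻¹ ^ p = 1 := by rw [inv_pow, hep, inv_one]
  have hpow (g : G) : ⁅e, g⁆ ^ p = 1 := by
    calc ⁅e, g⁆ ^ p = (e⁻¹ * ⁅e, g⁆) ^ p := by
          rw [mul_pow_prime_of_pow_mem_zpowers hp hodd hm (hinv ▸ one_mem _) (he g), hinv, one_mul]
      _ = (g * e⁻¹ * g⁻¹) ^ p := by rw [commutatorElement_def]; group
      _ = 1 := by rw [conj_pow, hinv]; group
  refine Subgroup.mem_upperCentralSeries_succ_iff.2 fun g ↦ ?_
  rw [Subgroup.upperCentralSeries_one]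
  exact mem_center_of_mem_zpowers hp (he g) (hpow g)

end Nilpotent

section MaximalNormalCyclic

variable {G : Type*} [Group G] {p : ℕ} {m y : G}

/-- A generator of a subgroup that is maximal among the normal cyclic `p`-subgroups of `G`. -/
def GeneratesMaximalNormalCyclic (p : ℕ) (m : G) : Prop :=
  MaximalFor (fun g : G ↦ (zpowers g).Normal ∧ ∃ k, g ^ p ^ k = 1) zpowers m

lemma exists_generatesMaximalNormalCyclic [Finite G] (p : ℕ) :
    ∃ m : G, GeneratesMaximalNormalCyclic p m :=
  (Set.toFinite {g : G | (zpowers g).Normal ∧ ∃ k, g ^ p ^ k = 1}).exists_maximalFor zpowers _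
    ⟨1, by rw [zpowers_one_eq_bot]; infer_instance, 0, by simp⟩

namespace GeneratesMaximalNormalCyclic

lemma notMem_zpowers [(zpowers m).Normal] (h : GeneratesMaximalNormalCyclic p m)
    (hy : y ∈ (zpowers m).upperCentralSeriesStep) (hyp : y ^ p ∈ zpowers m) (hym : y ∉ zpowers m) :
    m ∉ zpowers y := by
  intro hmy
  have hle : zpowers m ≤ zpowers y := zpowers_le.2 hmy
  have hnorm : (zpowers y).Normal := by
    refine ⟨fun d hd g ↦ ?_⟩
    have hconj : g * y * g⁻¹ ∈ zpowers y := by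
      have := mul_mem (inv_mem (hle (hy g))) (mem_zpowers y)
      rwa [commutatorElement_inv, commutatorElement_def, inv_mul_cancel_right] at this
    obtain ⟨j, rfl⟩ := hd
    exact conj_zpow (a := g) (b := y) ▸ zpow_mem hconj j
  have hpow : ∃ k, y ^ p ^ k = 1 := by
    obtain ⟨k, hk⟩ := h.1.2
    obtain ⟨j, hj⟩ := hyp
    refine ⟨k + 1, ?_⟩
    rw [pow_succ', pow_mul, ← hj, ← zpow_natCast, zpow_comm, zpow_natCast, hk, one_zpow]
  exact hym (h.2 ⟨hnorm, hpow⟩ hle (mem_zpowers y))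

lemma exists_notMem_pow_prime_eq_one [Group.IsNilpotent G] [(zpowers m).Normal]
    (h : GeneratesMaximalNormalCyclic p m) (hp : p.Prime) (hodd : Odd p)
    (hy : y ∈ (zpowers m).upperCentralSeriesStep) (hyp : y ^ p ∈ zpowers m) (hym : y ∉ zpowers m) :
    ∃ e ∉ zpowers m, e ^ p = 1 ∧ e ∈ (zpowers m).upperCentralSeriesStep := by
  obtain ⟨n, hn⟩ := h.1.2
  obtain ⟨k, hk⟩ := mem_zpowers_iff.1 hyp
  obtain ⟨j, rfl⟩ : (p : ℤ) ∣ k := by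
    by_contra hpk
    have hky : m ^ k ∈ zpowers y := hk ▸ npow_mem_zpowers y p
    exact h.notMem_zpowers hy hyp hym <|
      zpowers_le.2 hky (mem_zpowers_zpow_of_pow_prime_pow_eq_one hp hn hpk)
  have hc : m ^ (-j) ∈ zpowers m := zpow_mem_zpowers m _
  refine ⟨y * m ^ (-j), fun hmem ↦ hym ((mul_mem_cancel_right hc).1 hmem), ?_,
    mul_mem hy fun g ↦ commutator_le_left _ ⊤ (commutator_mem_commutator hc (mem_top g))⟩
  rw [mul_pow_prime_of_pow_mem_zpowers hp hodd hn hyp hc, ← hk, ← zpow_natCast, ← zpow_mul]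
  simp [mul_comm]

end GeneratesMaximalNormalCyclic

theorem exists_mem_upperCentralSeries_two_notMem_zpowers [Finite G] [Group.IsNilpotent G]
    (hp : p.Prime) (hodd : Odd p) {P : Subgroup G} [P.Normal] (hP : IsPGroup p P)
    (hcyc : ¬ IsCyclic P) (x : G) :
    ∃ e ∈ Subgroup.upperCentralSeries G 2, e ^ p = 1 ∧ e ∉ zpowers x := by
  obtain ⟨m, hm⟩ := exists_generatesMaximalNormalCyclic (G := G) p
  have := hm.1.1
  obtain ⟨n, hn⟩ := hm.1.2
  have hPm : ¬ P ≤ zpowers m := fun hle ↦ hcyc (isCyclic_of_le hle)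
  obtain ⟨y, hym, hyp, hy⟩ := exists_mem_upperCentralSeriesStep_pow_mem hP hPm
  obtain ⟨e, hem, hep, he⟩ := hm.exists_notMem_pow_prime_eq_one hp hodd hy hyp hym
  have hm1 : m ≠ 1 := fun h ↦ hm.notMem_zpowers hy hyp hym (h ▸ one_mem _)
  obtain ⟨z, hzm, hz⟩ := exists_mem_zpowers_orderOf_eq_prime hp hn hm1
  have hzp : z ^ p = 1 := hz ▸ pow_orderOf_eq_one z
  by_cases hzx : z ∈ zpowers x
  · refine ⟨e, mem_upperCentralSeries_two_of_mem_upperCentralSeriesStep hp hodd hn hep he, hep,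
      fun hex ↦ hem ?_⟩
    obtain ⟨k, hk⟩ : (⟨e, hex⟩ : zpowers x) ∈ zpowers (⟨z, hzx⟩ : zpowers x) :=
      mem_zpowers_of_pow_orderOf_eq_one (by ext; simpa [hz] using hep)
    exact zpowers_le.2 hzm ⟨k, congrArg Subtype.val hk⟩
  · have hZ : center G ≤ Subgroup.upperCentralSeries G 2 :=
      Subgroup.upperCentralSeries_one G ▸ Subgroup.upperCentralSeries_mono G one_le_two
    exact ⟨z, hZ (mem_center_of_mem_zpowers hp hzm hzp), hzp, hzx⟩

end MaximalNormalCyclic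

lemma mk_one_mem_upperCentralSeries {G : Type*} [Group G] (A : Type*) [Group A] {n : ℕ} {e : G}
    (he : e ∈ Subgroup.upperCentralSeries G n) :
    ((e, 1) : G × A) ∈ Subgroup.upperCentralSeries (G × A) n := by
  induction n generalizing e with
  | zero => exact mem_bot.2 (Prod.ext (mem_bot.1 he) rfl)
  | succ n ih =>
    intro g
    have hg : ⁅((e, 1) : G × A), g⁆ = (⁅e, g.1⁆, 1) :=
      Prod.ext rfl (commutatorElement_one_left g.2)
    exact hg ▸ ih (he g.1)

theorem cd_ge_three_general {G A : Type*} [Group G] [Finite G] [Group.IsNilpotent G] [Group A]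
    [Finite A] (hodd : Odd (Nat.card G))
    (hsyl : ∀ p : ℕ, p.Prime → p ∣ Nat.card G → ∀ P : Sylow p G, ¬ IsCyclic ↥(P : Subgroup G))
    (x : G × A) (hx : x.1 ≠ 1) :
    3 ≤ (cyclicSubgroupsOfOrder (G × A) (orderOf x)).ncard := by
  obtain ⟨p, hp, hpx⟩ := Nat.exists_prime_and_dvd (orderOf_eq_one_iff.not.2 hx)
  have hpG : p ∣ Nat.card G := hpx.trans (orderOf_dvd_natCard x.1)
  have hpodd : Odd p := hodd.of_dvd_nat hpG
  have := Fact.mk hp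
  let P : Sylow p G := default
  obtain ⟨e, he, hep, hex⟩ := exists_mem_upperCentralSeries_two_notMem_zpowers hp hpodd
    P.isPGroup' (hsyl p hp hpG P) x.1
  have hex' : ((e, 1) : G × A) ∉ zpowers x := by
    rintro ⟨k, hk⟩
    exact hex ⟨k, congrArg Prod.fst hk⟩
  calc 3 ≤ p := hp.odd_iff.1 hpodd
    _ ≤ (cyclicSubgroupsOfOrder (G × A) (orderOf x)).ncard :=
      prime_le_ncard_cyclicSubgroupsOfOrder hp hpodd (hpx.trans orderOf_fst_dvd_orderOf)
        (mk_one_mem_upperCentralSeries A he) (Prod.ext hep (one_pow p)) hex'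

theorem cd_ge_three {G' : Type*} [Group G'] [Finite G'] [Group.IsNilpotent G']
    (hodd : Odd (Nat.card G')) (hnt : Nat.card G' ≠ 1)
    (hsyl : ∀ p : ℕ, p.Prime → p ∣ Nat.card G' → ∀ P : Sylow p G', ¬ IsCyclic ↥(P : Subgroup G'))
    (n : ℕ) [NeZero n] (hcop : Nat.Coprime n (Nat.card G'))
    (x : G' × Multiplicative (ZMod n)) (hx : x.1 ≠ 1) :
    3 ≤ Set.ncard {H : Subgroup (G' × Multiplicative (ZMod n)) |
      ∃ g : G' × Multiplicative (ZMod n), orderOf g = orderOf x ∧ H = Subgroup.zpowers g} :=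
  have : Finite (Multiplicative (ZMod n)) := inferInstanceAs (Finite (ZMod n))
  cd_ge_three_general hodd hsyl x hx
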